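/- arXiv:2103.09786 — 4 statements merged into one kernel-verified Lean document; each statement's English description precedes it below -/
import Mathlib

section
/- Let α > 1. There exists a constant c = c(α) > 0 such that for every u > 0 and all reals l₁, l₂ with l₁ ≥ 1 and l₂ − l₁ ≥ 2, the intensity measure of the set of ellipses that intersect both the closed ball of radius l₁ centered at the origin and the circle of radius l₂ centered at the origin satisfies μ_{u,α}( { (z,R,V) : E(z,R,V) ∩ closedBall(0,l₁) ≠ ∅ and E(z,R,V) ∩ {x ∈ ℝ² : |x| = l₂} ≠ ∅ } ) ≤ c · u · l₁ · (l₂ − l₁)^{1−α}. -/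
open MeasureTheory Real Set

noncomputable section

/-- The intensity measure of the ellipses model with parameters `u` and `α`, viewed as a
measure on `ℝ² × ℝ × ℝ` (coordinates: center `z = (z₁, z₂)`, major-axis length `R`,
angle `V`), with density `u · α R^{-(1+α)} · (1/π)` with respect to Lebesgue measure,
supported on `R ∈ [1,∞)` and `V ∈ (-π/2, π/2]`. -/
def ellipsesMeasure (u α : ℝ) : Measure (ℝ × ℝ × ℝ × ℝ) :=
  volume.withDensity fun p =>
    if 1 ≤ p.2.2.1 ∧ p.2.2.2 ∈ Ioc (-(π / 2)) (π / 2) then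
      ENNReal.ofReal (u * α * p.2.2.1 ^ (-(1 + α)) / π)
    else 0

/-- The closed ellipse with center `(p.1, p.2.1)`, major axis of length `p.2.2.1` making
angle `p.2.2.2` with the horizontal direction, and minor axis of length `1`. -/
def ellipse (p : ℝ × ℝ × ℝ × ℝ) : Set (ℝ × ℝ) :=
  {x | ∃ t w : ℝ, (2 * t / p.2.2.1) ^ 2 + (2 * w) ^ 2 ≤ 1 ∧
    x = (p.1 + t * Real.cos p.2.2.2 - w * Real.sin p.2.2.2,
         p.2.1 + t * Real.sin p.2.2.2 + w * Real.cos p.2.2.2)}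

/-- The closed Euclidean ball of radius `r` centered at the origin of `ℝ²`. -/
def euclBall (r : ℝ) : Set (ℝ × ℝ) := {x | Real.sqrt (x.1 ^ 2 + x.2 ^ 2) ≤ r}

/-- The Euclidean circle of radius `r` centered at the origin of `ℝ²`. -/
def euclCircle (r : ℝ) : Set (ℝ × ℝ) := {x | Real.sqrt (x.1 ^ 2 + x.2 ^ 2) = r}

/-- Measurable superset of the crossing event (restricted to `1 ≤ R`). -/
def superSet (l₁ l₂ : ℝ) : Set (ℝ × ℝ × ℝ × ℝ) :=
  {p | p.2.2.1 < 1 ∨ (l₂ - l₁ ≤ p.2.2.1 ∧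
    ((p.2.2.1 ≤ 2 * l₁ ∧ l₂ - p.2.2.1 / 2 ≤ √(p.1 ^ 2 + p.2.1 ^ 2) ∧
        √(p.1 ^ 2 + p.2.1 ^ 2) ≤ l₁ + p.2.2.1 / 2) ∨
     (2 * l₁ < p.2.2.1 ∧ |p.1 * Real.cos p.2.2.2 + p.2.1 * Real.sin p.2.2.2| ≤ l₁ + p.2.2.1 / 2 ∧
       |-p.1 * Real.sin p.2.2.2 + p.2.1 * Real.cos p.2.2.2| ≤ l₁ + 1 / 2)))}

lemma measurableSet_superSet (l₁ l₂ : ℝ) : MeasurableSet (superSet l₁ l₂) := by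
  unfold superSet
  simp only [ofPred_or, ofPred_and]
  refine MeasurableSet.union (measurableSet_lt ?_ ?_)
    (MeasurableSet.inter (measurableSet_le ?_ ?_)
      (MeasurableSet.union (MeasurableSet.inter (measurableSet_le ?_ ?_)
        (MeasurableSet.inter (measurableSet_le ?_ ?_) (measurableSet_le ?_ ?_)))
        (MeasurableSet.inter (measurableSet_lt ?_ ?_)
        (MeasurableSet.inter (measurableSet_le ?_ ?_) (measurableSet_le ?_ ?_))))) <;>
    fun_prop

lemma sqrt_eq_norm (a b : ℝ) : √(a ^ 2 + b ^ 2) = ‖(⟨a, b⟩ : ℂ)‖ := by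
  rw [Complex.norm_def, Complex.normSq_mk]; congr 1; ring

lemma tw_bound {R t w : ℝ} (hR : 1 ≤ R) (h : (2 * t / R) ^ 2 + (2 * w) ^ 2 ≤ 1) :
    t ^ 2 + w ^ 2 ≤ (R / 2) ^ 2 ∧ |t| ≤ R / 2 ∧ |w| ≤ 1 / 2 := by
  have hR0 : 0 < R := by linarith
  set s := 2 * t / R with hs
  have ht : t = s * R / 2 := by rw [hs]; field_simp
  have hw : |2 * w| ≤ 1 := by
    refine abs_le_of_sq_le_sq ?_ (by norm_num)
    nlinarith [sq_nonneg s]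
  have hs1 : |s| ≤ 1 := by
    refine abs_le_of_sq_le_sq ?_ (by norm_num)
    nlinarith [sq_nonneg (2 * w)]
  refine ⟨?_, ?_, ?_⟩
  · rw [ht]
    have : (2 * w) ^ 2 ≤ (2 * w) ^ 2 * R ^ 2 := by
      nlinarith [sq_nonneg (2 * w), mul_nonneg (sq_nonneg (2 * w)) (by nlinarith : 0 ≤ R ^ 2 - 1)]
    nlinarith [mul_le_mul_of_nonneg_right h (sq_nonneg R)]
  · rw [ht, abs_div, abs_mul, abs_of_pos hR0]; norm_num
    nlinarith
  · rw [abs_mul] at hw; norm_num at hw; linarith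

lemma dist_bound {a b t w V R : ℝ} (hR : 1 ≤ R) (h : (2 * t / R) ^ 2 + (2 * w) ^ 2 ≤ 1) :
    ‖(⟨a + t * Real.cos V - w * Real.sin V, b + t * Real.sin V + w * Real.cos V⟩ : ℂ)
      - ⟨a, b⟩‖ ≤ R / 2 := by
  have h1 := (tw_bound hR h).1
  have : (⟨a + t * Real.cos V - w * Real.sin V, b + t * Real.sin V + w * Real.cos V⟩ : ℂ)
      - ⟨a, b⟩ = ⟨t * Real.cos V - w * Real.sin V, t * Real.sin V + w * Real.cos V⟩ := by
    apply Complex.ext <;> simp <;> ring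
  rw [this, ← sqrt_eq_norm]
  refine Real.sqrt_le_iff.mpr ⟨by linarith, ?_⟩
  nlinarith [Real.sin_sq_add_cos_sq V]

lemma subset_superSet {l₁ l₂ : ℝ} (h1 : 1 ≤ l₁) (h2 : 2 ≤ l₂ - l₁) :
    {p | (ellipse p ∩ euclBall l₁).Nonempty ∧ (ellipse p ∩ euclCircle l₂).Nonempty}
      ⊆ superSet l₁ l₂ := by
  rintro ⟨a, b, R, V⟩ ⟨⟨x, ⟨t, w, htw, rfl⟩, hx⟩, ⟨y, ⟨t', w', htw', rfl⟩, hy⟩⟩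
  simp only [euclBall, euclCircle, mem_ofPred_eq] at hx hy htw htw'
  simp only [superSet, mem_ofPred_eq]
  by_cases hR : R < 1
  · exact Or.inl hR
  push Not at hR
  right
  have d1 := dist_bound (a := a) (b := b) (V := V) hR htw
  have d2 := dist_bound (a := a) (b := b) (V := V) hR htw'
  have hx' := hx
  rw [sqrt_eq_norm] at hx' hy
  have e1 := abs_le.mp ((abs_norm_sub_norm_le _ _).trans d1)
  have e2 := abs_le.mp ((abs_norm_sub_norm_le _ _).trans d2)
  refine ⟨by linarith, ?_⟩
  rcases le_or_gt R (2 * l₁) with hc | hc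
  · left
    rw [sqrt_eq_norm]
    exact ⟨hc, by linarith, by linarith⟩
  · right
    obtain ⟨-, ht, hw⟩ := tw_bound hR htw
    have hsq := (Real.sqrt_le_left (by linarith)).mp hx
    have sc := Real.sin_sq_add_cos_sq V
    set c := Real.cos V
    set s := Real.sin V
    have k1 : |a * c + b * s + t| ≤ l₁ := by
      refine abs_le_of_sq_le_sq ?_ (by linarith)
      have : (a + t * c - w * s) ^ 2 + (b + t * s + w * c) ^ 2
          = (a * c + b * s + t) ^ 2 + (-a * s + b * c + w) ^ 2 := by
        linear_combination (t^2 + w^2 - a^2 - b^2) * sc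
      nlinarith [sq_nonneg (-a * s + b * c + w)]
    have k2 : |-a * s + b * c + w| ≤ l₁ := by
      refine abs_le_of_sq_le_sq ?_ (by linarith)
      have : (a + t * c - w * s) ^ 2 + (b + t * s + w * c) ^ 2
          = (a * c + b * s + t) ^ 2 + (-a * s + b * c + w) ^ 2 := by
        linear_combination (t^2 + w^2 - a^2 - b^2) * sc
      nlinarith [sq_nonneg (a * c + b * s + t)]
    rw [abs_le] at ht hw k1 k2
    refine ⟨hc, ?_, ?_⟩ <;> rw [abs_le] <;> constructor <;> linarith

lemma vol_annulus {r s : ℝ} (hr : 0 ≤ r) (hrs : r ≤ s) :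
    volume {z : ℝ × ℝ | r ≤ √(z.1 ^ 2 + z.2 ^ 2) ∧ √(z.1 ^ 2 + z.2 ^ 2) ≤ s}
      = ENNReal.ofReal (π * (s ^ 2 - r ^ 2)) := by
  rw [← Complex.volume_preserving_equiv_real_prod.measure_preimage_equiv]
  have : Complex.measurableEquivRealProd ⁻¹'
      {z : ℝ × ℝ | r ≤ √(z.1 ^ 2 + z.2 ^ 2) ∧ √(z.1 ^ 2 + z.2 ^ 2) ≤ s}
      = Metric.closedBall 0 s \ Metric.ball 0 r := by
    ext z
    simp [sqrt_eq_norm, Complex.measurableEquivRealProd_apply, and_comm]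
  rw [this, measure_sdiff ((Metric.ball_subset_ball hrs).trans Metric.ball_subset_closedBall)
    measurableSet_ball.nullMeasurableSet (by simp [Complex.volume_ball, ENNReal.mul_eq_top]),
    Complex.volume_closedBall, Complex.volume_ball]
  have hp : ((NNReal.pi : NNReal) : ENNReal) = ENNReal.ofReal π := by
    rw [← NNReal.coe_real_pi, ENNReal.ofReal_coe_nnreal]
  rw [hp, ← ENNReal.ofReal_pow (hr.trans hrs), ← ENNReal.ofReal_pow hr,
    ← ENNReal.ofReal_mul (by positivity), ← ENNReal.ofReal_mul (by positivity),
    ← ENNReal.ofReal_sub _ (by positivity)]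
  congr 1; ring

lemma vol_rect (V : ℝ) {r s : ℝ} (hr : 0 ≤ r) (hs : 0 ≤ s) :
    volume {z : ℝ × ℝ | |z.1 * Real.cos V + z.2 * Real.sin V| ≤ r ∧
      |-z.1 * Real.sin V + z.2 * Real.cos V| ≤ s} = ENNReal.ofReal (4 * r * s) := by
  let f : (ℝ × ℝ) →ₗ[ℝ] (ℝ × ℝ) :=
    Matrix.toLin (Module.Basis.finTwoProd ℝ) (Module.Basis.finTwoProd ℝ)
      !![Real.cos V, Real.sin V; -Real.sin V, Real.cos V]
  have hdet : LinearMap.det f = 1 := by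
    rw [LinearMap.det_toLin, Matrix.det_fin_two_of]
    nlinarith [Real.sin_sq_add_cos_sq V]
  have : {z : ℝ × ℝ | |z.1 * Real.cos V + z.2 * Real.sin V| ≤ r ∧
      |-z.1 * Real.sin V + z.2 * Real.cos V| ≤ s} = f ⁻¹' (Icc (-r) r ×ˢ Icc (-s) s) := by
    ext z
    simp only [f, Matrix.toLin_finTwoProd_apply, mem_preimage, mem_prod, mem_Icc, mem_ofPred_eq,
      abs_le]
    ring_nf
  rw [this, Measure.addHaar_preimage_linearMap _ (by rw [hdet]; norm_num), hdet,
    Measure.volume_eq_prod, Measure.prod_prod, Real.volume_Icc, Real.volume_Icc,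
    ← ENNReal.ofReal_mul (by linarith), ← ENNReal.ofReal_mul (by positivity)]
  congr 1; norm_num; ring

lemma vol_fiber {l₁ l₂ R : ℝ} (V : ℝ) (h1 : 1 ≤ l₁) (h2 : 2 ≤ l₂ - l₁) (hR : 1 ≤ R) :
    volume {z : ℝ × ℝ | (z.1, z.2, R, V) ∈ superSet l₁ l₂}
      ≤ if l₂ - l₁ ≤ R then ENNReal.ofReal (4 * π * l₁ * R) else 0 := by
  simp only [superSet, mem_ofPred_eq, not_lt.mpr hR, false_or]
  split_ifs with hd
  · rcases le_or_gt R (2 * l₁) with hc | hc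
    · simp only [hd, hc, not_lt.mpr hc, true_and, false_and, or_false]
      rw [vol_annulus (by linarith) (by linarith)]
      apply ENNReal.ofReal_le_ofReal
      have : (l₁ + R / 2) ^ 2 - (l₂ - R / 2) ^ 2 ≤ 4 * l₁ * R := by
        have : (l₁ + l₂) * (R - (l₂ - l₁)) ≤ (4 * l₁) * R :=
          mul_le_mul (by linarith) (by linarith) (by linarith) (by linarith)
        nlinarith
      nlinarith [Real.pi_pos, mul_le_mul_of_nonneg_left this Real.pi_pos.le]
    · simp only [hd, hc, not_le.mpr hc, true_and, false_and, false_or]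
      rw [vol_rect V (by linarith) (by linarith)]
      apply ENNReal.ofReal_le_ofReal
      have h3 := Real.pi_gt_three
      have e1 : (l₁ + R / 2) * (l₁ + 1 / 2) ≤ R * (2 * l₁) :=
        mul_le_mul (by linarith) (by linarith) (by linarith) (by linarith)
      have e2 : 0 < l₁ * R := by nlinarith
      nlinarith
  · simp [hd]

lemma lint_rpow {α d : ℝ} (hα : 1 < α) (hd : 0 < d) {K : ℝ} (hK : 0 ≤ K) :
    ∫⁻ R in Ici d, ENNReal.ofReal (K * R ^ (-α))
      = ENNReal.ofReal (K * (d ^ (1 - α) / (α - 1))) := by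
  rw [setLIntegral_congr Ioi_ae_eq_Ici.symm, ← ofReal_integral_eq_lintegral_ofReal]
  · rw [integral_const_mul, integral_Ioi_rpow_of_lt (by linarith) hd]
    congr 2
    rw [show -α + 1 = -(α - 1) by ring, neg_div_neg_eq, neg_sub]
  · exact (integrableOn_Ioi_rpow_of_lt (by linarith) hd).const_mul K
  · filter_upwards [ae_restrict_mem measurableSet_Ioi] with R hR
    have : 0 < R := hd.trans hR
    simp only [Pi.zero_apply]; positivity

/-- The density. -/
def dens (u α : ℝ) (q : ℝ × ℝ) : ENNReal :=
  if 1 ≤ q.1 ∧ q.2 ∈ Ioc (-(π / 2)) (π / 2) then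
      ENNReal.ofReal (u * α * q.1 ^ (-(1 + α)) / π) else 0

lemma measurable_dens (u α : ℝ) : Measurable (dens u α) := by
  unfold dens
  refine Measurable.ite ?_ ?_ measurable_const
  swap
  · fun_prop
  exact (measurableSet_le measurable_const measurable_fst).inter
    (measurable_snd measurableSet_Ioc)

lemma measure_superSet (u α l₁ l₂ : ℝ) :
    ellipsesMeasure u α (superSet l₁ l₂) = ∫⁻ q : ℝ × ℝ, dens u α q *
      volume {z : ℝ × ℝ | (z.1, z.2, q.1, q.2) ∈ superSet l₁ l₂} := by
  have hS := measurableSet_superSet l₁ l₂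
  have hm : Measurable (fun p : ℝ × ℝ × ℝ × ℝ => dens u α p.2.2) :=
    (measurable_dens u α).comp (by fun_prop)
  have e : ellipsesMeasure u α = volume.withDensity (fun p => dens u α p.2.2) := rfl
  rw [e, withDensity_apply _ hS, ← lintegral_indicator hS]
  have hp : MeasurePreserving (MeasurableEquiv.prodAssoc : (ℝ × ℝ) × (ℝ × ℝ) ≃ᵐ ℝ × ℝ × ℝ × ℝ)
      volume volume := volume_preserving_prodAssoc
  rw [← hp.lintegral_comp (hm.indicator hS), Measure.volume_eq_prod,
    lintegral_prod_symm (fun a => (superSet l₁ l₂).indicator (fun p => dens u α p.2.2)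
      (MeasurableEquiv.prodAssoc a)) (((hm.indicator hS).comp hp.measurable).aemeasurable)]
  refine lintegral_congr fun q => ?_
  have hF : MeasurableSet {z : ℝ × ℝ | (z.1, z.2, q.1, q.2) ∈ superSet l₁ l₂} :=
    (by fun_prop : Measurable (fun z : ℝ × ℝ => (z.1, z.2, q.1, q.2))) hS
  rw [← lintegral_indicator_const hF]
  rfl

theorem annulus_crossing_intensity_bound (α : ℝ) (hα : 1 < α) :
    ∃ c : ℝ, 0 < c ∧ ∀ u : ℝ, 0 < u → ∀ l₁ l₂ : ℝ, 1 ≤ l₁ → 2 ≤ l₂ - l₁ →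
      ellipsesMeasure u α
          {p | (ellipse p ∩ euclBall l₁).Nonempty ∧ (ellipse p ∩ euclCircle l₂).Nonempty} ≤
        ENNReal.ofReal (c * u * l₁ * (l₂ - l₁) ^ (1 - α)) := by
  have hα1 : 0 < α - 1 := by linarith
  refine ⟨4 * π * α / (α - 1), by positivity, fun u hu l₁ l₂ h1 h2 => ?_⟩
  refine (measure_mono (subset_superSet h1 h2)).trans ?_
  rw [measure_superSet]
  have hd : 0 < l₂ - l₁ := by linarith
  calc _ ≤ ∫⁻ q : ℝ × ℝ, (Ici (l₂ - l₁)).indicator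
            (fun R => ENNReal.ofReal (4 * u * α * l₁ * R ^ (-α))) q.1 *
          (Ioc (-(π / 2)) (π / 2)).indicator (fun _ => (1 : ENNReal)) q.2 := by
        refine lintegral_mono fun q => ?_
        unfold dens
        split_ifs with h
        · obtain ⟨hR, hV⟩ := h
          rw [indicator_of_mem hV, mul_one]
          refine (mul_le_mul_right (vol_fiber q.2 h1 h2 hR) _).trans ?_
          by_cases hc : l₂ - l₁ ≤ q.1
          · have hR0 : 0 < q.1 := by linarith
            rw [if_pos hc, indicator_of_mem (mem_Ici.mpr hc), ← ENNReal.ofReal_mul (by positivity)]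
            apply ENNReal.ofReal_le_ofReal
            have : q.1 ^ (-α) = q.1 ^ (-(1 + α)) * q.1 := by
              rw [← Real.rpow_add_one hR0.ne']; congr 1; ring
            rw [this]
            apply le_of_eq
            field_simp
          · simp [hc]
        · simp
    _ = ENNReal.ofReal (4 * u * α * l₁ * ((l₂ - l₁) ^ (1 - α) / (α - 1))) * ENNReal.ofReal π := by
        rw [Measure.volume_eq_prod, lintegral_prod_mul, lintegral_indicator measurableSet_Ici,
          lint_rpow hα hd (by positivity), lintegral_indicator_const measurableSet_Ioc,
          Real.volume_Ioc, one_mul]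
        · congr 2; ring
        · exact (Measurable.indicator (by fun_prop) measurableSet_Ici).aemeasurable
        · exact (measurable_const.indicator measurableSet_Ioc).aemeasurable
    _ ≤ _ := by
        rw [← ENNReal.ofReal_mul (by positivity)]
        apply ENNReal.ofReal_le_ofReal
        apply le_of_eq
        field_simp
end
end

section
/- Fix d ≥ 1, ε > 0 and γ ∈ (0, 1). There exist b = b(d) ∈ (0,1) and N' = N'(ε, γ, d) such that the following holds. Let x, y ∈ ℤ^d with N := |x − y| ≥ N', let n be the greatest positive integer with n log(1/γ) ≤ log log N − ε log log log N, and set N_k := N^{γ^k}. Then every hierarchy H_n(x,y) = (z_σ : σ ∈ {0,1}^k, 1 ≤ k ≤ n) of depth n that satisfies, for all 0 ≤ k ≤ n−2 and all σ ∈ {0,1}^k, that |z_{σ01} − z_{σ00}|_∞ and |z_{σ10} − z_{σ11}|_∞ both lie in [N_{k+1}/2, N_{k+1}], also satisfies: for all 0 ≤ k ≤ n−2 and all σ ∈ {0,1}^k, b · N_k ≤ |z_{σ01} − z_{σ10}| ≤ b^{−1} · N_k. -/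
open Real Set

noncomputable section

/-- The Euclidean distance between two points of `ℤ^d`. -/
def euclDist (d : ℕ) (x y : Fin d → ℤ) : ℝ :=
  Real.sqrt (∑ i, ((x i : ℝ) - (y i : ℝ)) ^ 2)

/-- The supremum (`ℓ^∞`) distance between two points of `ℤ^d`. -/
def supDist (d : ℕ) (x y : Fin d → ℤ) : ℝ :=
  ⨆ i, |((x i : ℝ) - (y i : ℝ))|

lemma hh_eucl_eq (d : ℕ) (x y : Fin d → ℤ) :
    euclDist d x y = dist (WithLp.toLp 2 (fun i => (x i : ℝ)) : EuclideanSpace ℝ (Fin d))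
      (WithLp.toLp 2 (fun i => (y i : ℝ))) := by
  rw [EuclideanSpace.dist_eq]
  simp [euclDist, Real.dist_eq, sq_abs]

lemma hh_tri (d : ℕ) (x y z : Fin d → ℤ) :
    euclDist d x z ≤ euclDist d x y + euclDist d y z := by
  simp only [hh_eucl_eq]
  exact dist_triangle _ _ _

lemma hh_comm (d : ℕ) (x y : Fin d → ℤ) : euclDist d x y = euclDist d y x := by
  simp only [hh_eucl_eq]
  exact dist_comm _ _

lemma hh_sup_le (d : ℕ) (hd : 1 ≤ d) (x y : Fin d → ℤ) : supDist d x y ≤ euclDist d x y := by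
  haveI : Nonempty (Fin d) := ⟨⟨0, hd⟩⟩
  refine ciSup_le fun i => ?_
  refine Real.le_sqrt_of_sq_le ?_
  rw [sq_abs]
  exact Finset.single_le_sum (f := fun i => ((x i : ℝ) - (y i : ℝ)) ^ 2)
    (fun j _ => sq_nonneg _) (Finset.mem_univ i)

lemma hh_le_sup (d : ℕ) (hd : 1 ≤ d) (x y : Fin d → ℤ) :
    euclDist d x y ≤ d * supDist d x y := by
  have hle : ∀ i, |((x i : ℝ) - (y i : ℝ))| ≤ supDist d x y := fun i =>
    le_ciSup (f := fun i => |((x i : ℝ) - (y i : ℝ))|) (Set.finite_range _).bddAbove i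
  have h0 : 0 ≤ supDist d x y := (abs_nonneg _).trans (hle ⟨0, hd⟩)
  have hd' : (1 : ℝ) ≤ d := by exact_mod_cast hd
  refine Real.sqrt_le_iff.2 ⟨by positivity, ?_⟩
  calc ∑ i, ((x i : ℝ) - (y i : ℝ)) ^ 2 ≤ ∑ _i : Fin d, supDist d x y ^ 2 := by
        refine Finset.sum_le_sum fun i _ => ?_
        rw [← sq_abs]
        exact pow_le_pow_left₀ (abs_nonneg _) (hle i) 2
    _ = d * supDist d x y ^ 2 := by simp
    _ ≤ (d * supDist d x y) ^ 2 := by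
        rw [mul_pow]
        refine mul_le_mul_of_nonneg_right ?_ (sq_nonneg _)
        nlinarith

/-- The scale separation: `8 d N_{k+1} ≤ N_k`. -/
lemma hh_scale (C ε γ N : ℝ) (hC : 1 < C) (hγ0 : 0 < γ) (hγ1 : γ < 1)
    (hN : 1 < N) (hL : Real.log (Real.log C / (1 - γ)) ≤ ε * Real.log (Real.log (Real.log N)))
    (n k : ℕ) (hk : k ≤ n)
    (hn : (n : ℝ) * Real.log (1 / γ) ≤
      Real.log (Real.log N) - ε * Real.log (Real.log (Real.log N))) :
    C * N ^ (γ ^ (k + 1)) ≤ N ^ (γ ^ k) := by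
  have hlN : 0 < Real.log N := Real.log_pos hN
  have hlC : 0 < Real.log C := Real.log_pos hC
  have h1 : 0 < 1 - γ := by linarith
  have hγn : 0 < γ ^ n := by positivity
  have key : Real.log C / (1 - γ) ≤ γ ^ n * Real.log N := by
    rw [← Real.log_le_log_iff (by positivity) (by positivity),
      Real.log_mul hγn.ne' hlN.ne', Real.log_pow]
    rw [one_div, Real.log_inv] at hn
    linarith
  have hkn : γ ^ n ≤ γ ^ k := pow_le_pow_of_le_one hγ0.le hγ1.le hk
  have key2 : Real.log C ≤ γ ^ k * Real.log N * (1 - γ) := by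
    rw [div_le_iff₀ h1] at key
    refine key.trans ?_
    gcongr
  have hN0 : 0 < N := by linarith
  rw [← Real.log_le_log_iff (by positivity) (by positivity),
    Real.log_mul (by positivity) (by positivity), Real.log_rpow hN0, Real.log_rpow hN0, pow_succ]
  linarith

/-- Geometric consequence of the scale conditions on a hierarchy: there are `b = b(d) ∈ (0,1)`
and `N' = N'(ε, γ, d)` such that for `N := |x - y| ≥ N'` and `n` the greatest positive
integer with `n log(1/γ) ≤ log log N - ε log log log N`, every hierarchy of depth `n`
connecting `x` to `y` (encoded by a map `z` on binary words, words being lists of booleans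
with digits appended on the right) whose gaps satisfy
`|z_{σ01} - z_{σ00}|_∞, |z_{σ10} - z_{σ11}|_∞ ∈ [N_{k+1}/2, N_{k+1}]` also satisfies
`b N_k ≤ |z_{σ01} - z_{σ10}| ≤ b⁻¹ N_k` for all `0 ≤ k ≤ n-2` and `σ ∈ {0,1}^k`,
where `N_k := N^{γ^k}`. -/
theorem hierarchy_highway_lengths (d : ℕ) (hd : 1 ≤ d) :
    ∃ b : ℝ, 0 < b ∧ b < 1 ∧
      ∀ ε : ℝ, 0 < ε → ∀ γ : ℝ, 0 < γ → γ < 1 →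
        ∃ N' : ℝ, ∀ x y : Fin d → ℤ, ∀ N : ℝ, N = euclDist d x y → N' ≤ N →
          ∀ n : ℕ, 1 ≤ n →
            (n : ℝ) * Real.log (1 / γ) ≤
              Real.log (Real.log N) - ε * Real.log (Real.log (Real.log N)) →
            (∀ m : ℕ, 1 ≤ m →
              (m : ℝ) * Real.log (1 / γ) ≤
                Real.log (Real.log N) - ε * Real.log (Real.log (Real.log N)) → m ≤ n) →
            ∀ z : List Bool → (Fin d → ℤ),
              z [false] = x → z [true] = y →
              (∀ σ : List Bool, σ.length + 2 ≤ n →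
                z (σ ++ [false, false]) = z (σ ++ [false]) ∧
                z (σ ++ [true, true]) = z (σ ++ [true])) →
              (∀ σ : List Bool, σ.length + 2 ≤ n →
                supDist d (z (σ ++ [false, true])) (z (σ ++ [false, false])) ∈
                    Icc (N ^ (γ ^ (σ.length + 1)) / 2) (N ^ (γ ^ (σ.length + 1))) ∧
                supDist d (z (σ ++ [true, false])) (z (σ ++ [true, true])) ∈
                    Icc (N ^ (γ ^ (σ.length + 1)) / 2) (N ^ (γ ^ (σ.length + 1)))) →
              ∀ σ : List Bool, σ.length + 2 ≤ n →
                b * N ^ (γ ^ σ.length) ≤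
                    euclDist d (z (σ ++ [false, true])) (z (σ ++ [true, false])) ∧
                  euclDist d (z (σ ++ [false, true])) (z (σ ++ [true, false])) ≤
                    b⁻¹ * N ^ (γ ^ σ.length) := by
  have hd' : (1 : ℝ) ≤ d := by exact_mod_cast hd
  refine ⟨1 / (4 * d), by positivity, ?_, ?_⟩
  · rw [div_lt_one (by positivity)]; linarith
  intro ε hε γ hγ0 hγ1
  have ht : Filter.Tendsto (fun N : ℝ => ε * Real.log (Real.log (Real.log N)))
      Filter.atTop Filter.atTop :=
    (Real.tendsto_log_atTop.comp
      (Real.tendsto_log_atTop.comp Real.tendsto_log_atTop)).const_mul_atTop hε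
  obtain ⟨N', hN'⟩ := Filter.eventually_atTop.1
    ((ht.eventually_ge_atTop (Real.log (Real.log (8 * d) / (1 - γ)))).and
      (Filter.eventually_gt_atTop (1 : ℝ)))
  refine ⟨N', ?_⟩
  intro x y N hN hNN n _ hn _ z hzx hzy hz hgap σ hσ
  obtain ⟨hL, hN1⟩ := hN' N hNN
  have hN0 : 0 < N := by linarith
  have hsc := hh_scale (8 * d) ε γ N (by linarith) hγ0 hγ1 hN1 hL n σ.length (by omega) hn
  have hD : N ^ (γ ^ σ.length) / 2 ≤ euclDist d (z (σ ++ [false])) (z (σ ++ [true])) ∧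
      euclDist d (z (σ ++ [false])) (z (σ ++ [true])) ≤ d * N ^ (γ ^ σ.length) := by
    rcases List.eq_nil_or_concat σ with rfl | ⟨τ, c, rfl⟩
    · simp only [List.nil_append, hzx, hzy, ← hN, List.length_nil, pow_zero, Real.rpow_one]
      constructor <;> nlinarith
    · have hlen : (τ ++ [c]).length = τ.length + 1 := by simp
      rw [List.concat_eq_append] at hσ ⊢
      rw [hlen] at hσ ⊢
      obtain ⟨⟨h1, h2⟩, h3, h4⟩ := hgap τ (by omega)
      cases c
      · rw [hh_comm]
        simp only [List.append_assoc, List.cons_append, List.nil_append]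
        exact ⟨h1.trans (hh_sup_le d hd _ _), (hh_le_sup d hd _ _).trans (by gcongr)⟩
      · simp only [List.append_assoc, List.cons_append, List.nil_append]
        exact ⟨h3.trans (hh_sup_le d hd _ _), (hh_le_sup d hd _ _).trans (by gcongr)⟩
  obtain ⟨⟨_, h2⟩, _, h4⟩ := hgap σ hσ
  rw [(hz σ hσ).1] at h2
  rw [(hz σ hσ).2] at h4
  set M := N ^ (γ ^ σ.length) with hM
  set M1 := N ^ (γ ^ (σ.length + 1)) with hM1
  have hMpos : 0 < M := by positivity
  have e2 : euclDist d (z (σ ++ [false, true])) (z (σ ++ [false])) ≤ d * M1 :=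
    (hh_le_sup d hd _ _).trans (by gcongr)
  have e4 : euclDist d (z (σ ++ [true, false])) (z (σ ++ [true])) ≤ d * M1 :=
    (hh_le_sup d hd _ _).trans (by gcongr)
  have t1 := hh_tri d (z (σ ++ [false])) (z (σ ++ [false, true])) (z (σ ++ [true]))
  have t2 := hh_tri d (z (σ ++ [false, true])) (z (σ ++ [true, false])) (z (σ ++ [true]))
  have t3 := hh_tri d (z (σ ++ [false, true])) (z (σ ++ [false])) (z (σ ++ [true, false]))
  have t4 := hh_tri d (z (σ ++ [false])) (z (σ ++ [true])) (z (σ ++ [true, false]))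
  rw [hh_comm d (z (σ ++ [false])) (z (σ ++ [false, true]))] at t1
  rw [hh_comm d (z (σ ++ [true])) (z (σ ++ [true, false]))] at t4
  constructor
  · have : 1 / (4 * (d : ℝ)) * M ≤ 1 / 4 * M := by
      refine mul_le_mul_of_nonneg_right ?_ hMpos.le
      exact one_div_le_one_div_of_le (by norm_num) (by linarith)
    linarith
  · rw [one_div, inv_inv]
    nlinarith [hD.2]
end
end

section
/- Let I_1, …, I_m be finitely many closed intervals of ℝ with [0,1] ⊆ I_1 ∪ ⋯ ∪ I_m. Then there exist n ≤ m and indices j_1, …, j_n ∈ {1, …, m} such that [0,1] ⊆ I_{j_1} ∪ ⋯ ∪ I_{j_n}, consecutive intervals intersect (I_{j_k} ∩ I_{j_{k+1}} ≠ ∅ for 1 ≤ k < n), and non-consecutive intervals are disjoint (I_{j_k} ∩ I_{j_l} = ∅ whenever |k − l| ≥ 2). -/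
open Set

/-- Chain extraction from a finite closed-interval cover of `[0,1]`: one can select
`n ≤ m` of the intervals so that they still cover `[0,1]`, consecutive selected intervals
intersect, and non-consecutive selected intervals are disjoint. -/
theorem interval_cover_chain (m : ℕ) (I : Fin m → Set ℝ)
    (hI : ∀ i, ∃ a b : ℝ, a ≤ b ∧ I i = Icc a b)
    (hcover : Icc (0 : ℝ) 1 ⊆ ⋃ i, I i) :
    ∃ n : ℕ, n ≤ m ∧ ∃ j : Fin n → Fin m,
      Icc (0 : ℝ) 1 ⊆ ⋃ k, I (j k) ∧
      (∀ k : Fin n, ∀ h : (k : ℕ) + 1 < n, (I (j k) ∩ I (j ⟨(k : ℕ) + 1, h⟩)).Nonempty) ∧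
      (∀ k l : Fin n, 2 ≤ |(k : ℤ) - (l : ℤ)| → I (j k) ∩ I (j l) = ∅) := by
  classical
  obtain ⟨S, hS, hmin⟩ := Finset.exists_min_image
    ((Finset.univ : Finset (Finset (Fin m))).filter
      (fun S => ∀ x ∈ Icc (0 : ℝ) 1, ∃ i ∈ S, x ∈ I i)) Finset.card
    ⟨Finset.univ, by
      simp only [Finset.mem_filter, Finset.mem_univ, true_and]
      intro x hx
      exact mem_iUnion.1 (hcover hx)⟩
  simp only [Finset.mem_filter, Finset.mem_univ, true_and] at hS hmin
  have hp : ∀ i : Fin m, ∃ x : ℝ, i ∈ S →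
      x ∈ Icc (0 : ℝ) 1 ∧ x ∈ I i ∧ ∀ i' ∈ S, x ∈ I i' → i' = i := by
    intro i
    by_cases hi : i ∈ S
    · by_contra! hcon
      have := hmin (S.erase i) (by
        intro x hx
        obtain ⟨i', hi', hxi'⟩ := hS x hx
        by_cases h : i' = i
        · subst h
          obtain ⟨_, h2⟩ := hcon x
          obtain ⟨i'', h3, h4, h5⟩ := h2 hx hxi'
          exact ⟨i'', Finset.mem_erase.2 ⟨h5, h3⟩, h4⟩
        · exact ⟨i', Finset.mem_erase.2 ⟨h, hi'⟩, hxi'⟩)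
      have := Finset.card_erase_lt_of_mem hi
      omega
    · exact ⟨0, fun h => absurd h hi⟩
  choose p hp using hp
  have hq : ∀ k, ∃ i ∈ S, p i = (S.image p).orderEmbOfFin rfl k := by
    intro k
    exact Finset.mem_image.1 (Finset.orderEmbOfFin_mem (S.image p) rfl k)
  choose j hjS hjp using hq
  have hlt : ∀ k l, k < l → p (j k) < p (j l) := by
    intro k l h
    rw [hjp, hjp]
    exact (OrderEmbedding.lt_iff_lt _).2 h
  have hsurj : ∀ i ∈ S, ∃ k, j k = i := by
    intro i hi
    have : p i ∈ range ((S.image p).orderEmbOfFin rfl) := by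
      rw [Finset.range_orderEmbOfFin]
      exact Finset.mem_coe.2 (Finset.mem_image_of_mem p hi)
    obtain ⟨k, hk⟩ := this
    refine ⟨k, ?_⟩
    apply (hp i hi).2.2 _ (hjS k)
    rw [← hk, ← hjp]
    exact (hp _ (hjS k)).2.1
  have hmem : ∀ k, p (j k) ∈ I (j k) := fun k => (hp _ (hjS k)).2.1
  have hpriv : ∀ k l, p (j k) ∈ I (j l) → l = k := by
    intro k l h
    have h1 := (hp _ (hjS k)).2.2 _ (hjS l) h
    rcases lt_trichotomy l k with h2 | h2 | h2
    · exact absurd (hlt _ _ h2) (by rw [h1]; exact lt_irrefl _)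
    · exact h2
    · exact absurd (hlt _ _ h2) (by rw [h1]; exact lt_irrefl _)
  have hoc : ∀ i x y z, x ∈ I i → z ∈ I i → x ≤ y → y ≤ z → y ∈ I i := by
    intro i x y z hx hz h1 h2
    obtain ⟨a, b, -, e⟩ := hI i
    rw [e] at hx hz ⊢
    exact ⟨hx.1.trans h1, h2.trans hz.2⟩
  have hdis : ∀ k l : Fin (S.image p).card, (k : ℕ) + 2 ≤ l → I (j k) ∩ I (j l) = ∅ := by
    intro k l h
    rw [Set.eq_empty_iff_forall_notMem]
    rintro x ⟨hx1, hx2⟩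
    let r : Fin (S.image p).card := ⟨k + 1, by omega⟩
    have hkr : k < r := Fin.lt_def.2 (by simp [r])
    have hrl : r < l := Fin.lt_def.2 (by simp only [r]; omega)
    rcases le_total (p (j r)) x with hx | hx
    · exact hkr.ne (hpriv _ _ (hoc _ _ _ _ (hmem k) hx1 (hlt _ _ hkr).le hx))
    · exact hrl.ne' (hpriv _ _ (hoc _ _ _ _ hx2 (hmem l) hx (hlt _ _ hrl).le))
  refine ⟨(S.image p).card, ?_, j, ?_, ?_, ?_⟩
  · exact Finset.card_image_le.trans ((Finset.card_le_univ S).trans (by simp))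
  · intro x hx
    obtain ⟨i, hi, hxi⟩ := hS x hx
    obtain ⟨k, rfl⟩ := hsurj i hi
    exact mem_iUnion.2 ⟨k, hxi⟩
  · intro k h
    set r : Fin (S.image p).card := ⟨k + 1, h⟩ with hr
    have hkr : k < r := Fin.lt_def.2 (by simp [r])
    obtain ⟨a, b, hab, e⟩ := hI (j k)
    obtain ⟨c, d, hcd, f⟩ := hI (j r)
    have h1 := hmem k
    have h2 := hmem r
    have h3 := hlt _ _ hkr
    have h4 := (hp _ (hjS k)).1
    have h5 := (hp _ (hjS r)).1
    rw [e] at h1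
    rw [f] at h2
    have hb : b < p (j r) := by
      by_contra! hb
      exact hkr.ne (hpriv r k (by rw [e]; exact ⟨h1.1.trans h3.le, hb⟩))
    have hc : p (j k) < c := by
      by_contra! hc
      exact hkr.ne' (hpriv k r (by rw [f]; exact ⟨hc, h3.le.trans h2.2⟩))
    by_cases hbc : c ≤ b
    · refine ⟨b, ?_, ?_⟩
      · rw [e]; exact ⟨hab, le_rfl⟩
      · rw [f]; exact ⟨hbc, hb.le.trans h2.2⟩
    · exfalso
      push Not at hbc
      obtain ⟨x, hx1, hx2⟩ := exists_between hbc
      have hkx : p (j k) ≤ x := h1.2.trans hx1.le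
      have hxr : x ≤ p (j r) := hx2.le.trans h2.1
      obtain ⟨i, hi, hxi⟩ := hS x ⟨h4.1.trans hkx, hxr.trans h5.2⟩
      obtain ⟨l, rfl⟩ := hsurj i hi
      rcases lt_trichotomy l k with hl | hl | hl
      · exact hl.ne (hpriv k l (hoc _ _ _ _ (hmem l) hxi (hlt _ _ hl).le hkx))
      · rw [hl, e] at hxi
        exact absurd hxi.2 (not_le.2 hx1)
      · have hrl : r ≤ l := Fin.le_def.2 (by simp only [r]; exact hl)
        rcases hrl.eq_or_lt with hl | hl
        · rw [← hl, f] at hxi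
          exact absurd hxi.1 (not_le.2 hx2)
        · exact hl.ne' (hpriv r l (hoc _ _ _ _ hxi (hmem l) hxr (hlt _ _ hl).le))
  · intro k l h
    rcases le_abs.1 h with h | h
    · rw [inter_comm]
      exact hdis l k (by omega)
    · exact hdis k l (by omega)
end

section
/- Let W ⊂ ℝ² be a bounded measurable set, let 𝓔 be a finite family of compact convex subsets of ℝ², each contained in W and each containing a closed ball of radius 1, and let x ∈ ⋃𝓔. Suppose there is a continuous path contained in ⋃𝓔 from x to a point of the topological boundary ∂W of W. Then there exist n ≤ (2/π)·Vol(W) + 1 and sets e_1, …, e_n ∈ 𝓔 such that x ∈ e_1, e_n ∩ ∂W ≠ ∅, e_k ∩ e_{k+1} ≠ ∅ for 1 ≤ k < n, and e_k ∩ e_l = ∅ whenever |k − l| ≥ 2; moreover there is a polygonal path from x to a point of ∂W contained in e_1 ∪ ⋯ ∪ e_n whose total length is at most ((2/π)·Vol(W) + 1) · diam(W). -/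
open MeasureTheory Real Set


/-- `c 0, …, c n` is a chain of pieces of `ℰ` starting at a piece containing `x`. -/
def IsChainFrom {E : Type*} (ℰ : Finset (Set E)) (x : E) (n : ℕ) (c : ℕ → Set E) : Prop :=
  (∀ k ≤ n, c k ∈ ℰ) ∧ x ∈ c 0 ∧ ∀ k < n, (c k ∩ c (k + 1)).Nonempty

lemma IsChainFrom.extend {E : Type*} {ℰ : Finset (Set E)} {x : E} {n : ℕ} {c : ℕ → Set E}
    (h : IsChainFrom ℰ x n c) {e : Set E} (he : e ∈ ℰ) (hne : (c n ∩ e).Nonempty) :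
    ∃ c', IsChainFrom ℰ x (n + 1) c' ∧ c' (n + 1) = e := by
  obtain ⟨h1, h2, h3⟩ := h
  refine ⟨fun i => if i ≤ n then c i else e, ⟨?_, ?_, ?_⟩, by simp⟩
  · intro k _
    by_cases hk : k ≤ n
    · simpa [hk] using h1 k hk
    · simpa [hk] using he
  · simpa using h2
  · intro k hk
    rcases Nat.lt_or_ge k n with hkn | hkn
    · have := h3 k hkn
      simpa [hkn.le, Nat.succ_le_of_lt hkn] using this
    · have : k = n := by omega
      subst this
      simpa using hne

lemma IsChainFrom.shorten {E : Type*} {ℰ : Finset (Set E)} {x : E} {n : ℕ} {c : ℕ → Set E}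
    (h : IsChainFrom ℰ x n c) {k l : ℕ} (hkl : k + 2 ≤ l) (hl : l ≤ n)
    (hne : (c k ∩ c l).Nonempty) :
    ∃ m < n, ∃ c', IsChainFrom ℰ x m c' ∧ c' m = c n := by
  obtain ⟨h1, h2, h3⟩ := h
  refine ⟨n - (l - k - 1), by omega, fun i => if i ≤ k then c i else c (i + (l - k - 1)),
    ⟨?_, ?_, ?_⟩, ?_⟩
  · intro i hi
    by_cases hk : i ≤ k
    · simpa [hk] using h1 i (by omega)
    · simpa [hk] using h1 _ (by omega)
  · simpa using h2
  · intro i hi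
    rcases Nat.lt_trichotomy i k with hik | hik | hik
    · have := h3 i (by omega)
      simpa [hik.le, Nat.succ_le_of_lt hik] using this
    · subst hik
      have e1 : i + 1 + (l - i - 1) = l := by omega
      simpa [e1] using hne
    · have a1 : ¬ i ≤ k := by omega
      have a2 : ¬ i + 1 ≤ k := by omega
      have e1 : i + 1 + (l - k - 1) = i + (l - k - 1) + 1 := by omega
      have := h3 (i + (l - k - 1)) (by omega)
      simp only [a1, a2, if_false, e1]
      exact this
  · have a1 : ¬ n - (l - k - 1) ≤ k := by omega
    have e1 : n - (l - k - 1) + (l - k - 1) = n := by omega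
    simp only [a1, if_false, e1]

lemma exists_chain_to {E : Type*} [TopologicalSpace E] [T2Space E] (ℰ : Finset (Set E))
    (hcomp : ∀ e ∈ ℰ, IsCompact e) (x : E) (f : ℝ → E) (hf : ContinuousOn f (Icc 0 1))
    (h0 : f 0 = x) (hcov : ∀ t ∈ Icc (0 : ℝ) 1, f t ∈ ⋃₀ (ℰ : Set (Set E))) :
    ∃ n c, IsChainFrom ℰ x n c ∧ f 1 ∈ c n := by
  classical
  let R : Set E → Prop := fun e => ∃ n c, IsChainFrom ℰ x n c ∧ c n = e
  let A : Set E := ⋃ e ∈ ℰ.filter R, e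
  let B : Set E := ⋃ e ∈ ℰ.filter (fun e => ¬ R e), e
  have hA : IsClosed A := by
    apply Set.Finite.isClosed_biUnion (Finset.finite_toSet _)
    intro e he
    exact (hcomp e (Finset.mem_filter.1 he).1).isClosed
  have hB : IsClosed B := by
    apply Set.Finite.isClosed_biUnion (Finset.finite_toSet _)
    intro e he
    exact (hcomp e (Finset.mem_filter.1 he).1).isClosed
  have hpre : IsPreconnected (f '' Icc 0 1) := isPreconnected_Icc.image f hf
  have hAB : f '' Icc 0 1 ⊆ A ∪ B := by
    rintro _ ⟨t, ht, rfl⟩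
    obtain ⟨e, he, hte⟩ := hcov t ht
    by_cases hR : R e
    · exact Or.inl (mem_biUnion (x := e) (by simpa using ⟨he, hR⟩) hte)
    · exact Or.inr (mem_biUnion (x := e) (by simpa using ⟨he, hR⟩) hte)
  have hdisj : A ∩ B = ∅ := by
    rw [Set.eq_empty_iff_forall_notMem]
    rintro z ⟨hzA, hzB⟩
    simp only [A, B, mem_iUnion, Finset.mem_filter, exists_prop] at hzA hzB
    obtain ⟨e, ⟨he, n, c, hc, rfl⟩, hze⟩ := hzA
    obtain ⟨e', ⟨he', hR'⟩, hze'⟩ := hzB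
    obtain ⟨c', hc', h'⟩ := hc.extend he' ⟨z, hze, hze'⟩
    exact hR' ⟨_, c', hc', h'⟩
  have hxA : f 0 ∈ A := by
    obtain ⟨e, he, hte⟩ := hcov 0 (by simp)
    refine mem_biUnion (x := e) ?_ hte
    have : R e := ⟨0, fun _ => e, ⟨fun _ _ => he, h0 ▸ hte, by simp⟩, rfl⟩
    simpa using ⟨he, this⟩
  have h1A : f 1 ∈ A := by
    have h1m : f 1 ∈ f '' Icc (0:ℝ) 1 := mem_image_of_mem f (by simp)
    rcases hAB h1m with h | h
    · exact h
    · exfalso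
      obtain ⟨z, _, hz⟩ := (isPreconnected_closed_iff.1 hpre) A B hA hB hAB
        ⟨f 0, mem_image_of_mem f (by simp), hxA⟩ ⟨f 1, h1m, h⟩
      rw [hdisj] at hz
      exact hz
  simp only [A, mem_iUnion, Finset.mem_filter, exists_prop] at h1A
  obtain ⟨e, ⟨he, n, c, hc, rfl⟩, hze⟩ := h1A
  exact ⟨n, c, hc, hze⟩

lemma count_le (W : Set (EuclideanSpace ℝ (Fin 2)))
    (hWb : Bornology.IsBounded W) (m : ℕ) (e : ℕ → Set (EuclideanSpace ℝ (Fin 2)))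
    (hcomp : ∀ k < m, IsCompact (e k)) (hsub : ∀ k < m, e k ⊆ W)
    (hball : ∀ k < m, ∃ c : EuclideanSpace ℝ (Fin 2), Metric.closedBall c 1 ⊆ e k)
    (hd : ∀ k < m, ∀ l < m, k ≠ l → Disjoint (e k) (e l)) :
    (m : ℝ) * π ≤ (volume W).toReal := by
  have hfin : volume W ≠ ⊤ := hWb.measure_lt_top.ne
  have h1 : ∀ k ∈ Finset.range m, ENNReal.ofReal π ≤ volume (e k) := by
    intro k hk
    obtain ⟨c, hc⟩ := hball k (Finset.mem_range.1 hk)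
    refine le_trans (le_of_eq ?_) (measure_mono hc)
    rw [EuclideanSpace.volume_closedBall_fin_two]
    simp [ENNReal.ofReal, NNReal.pi, Real.toNNReal_of_nonneg pi_pos.le]
  have h2 : (m : ENNReal) * ENNReal.ofReal π ≤ volume W := by
    calc (m : ENNReal) * ENNReal.ofReal π = ∑ k ∈ Finset.range m, ENNReal.ofReal π := by simp
      _ ≤ ∑ k ∈ Finset.range m, volume (e k) := Finset.sum_le_sum h1
      _ = volume (⋃ k ∈ Finset.range m, e k) := by
        rw [measure_biUnion_finset]
        · intro k hk l hl hkl
          exact hd k (by simpa using hk) l (by simpa using hl) hkl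
        · intro k hk
          exact (hcomp k (by simpa using hk)).isClosed.measurableSet
      _ ≤ volume W := by
        apply measure_mono
        exact iUnion₂_subset fun k hk => hsub k (by simpa using hk)
  have h3 := ENNReal.toReal_mono hfin h2
  rwa [ENNReal.toReal_mul, ENNReal.toReal_natCast, ENNReal.toReal_ofReal pi_pos.le] at h3

/-- Distance on small scales: if a covered set is formed by finitely many compact convex
pieces inside a bounded region `W`, each containing a closed unit ball, and a point `x` of
the covered set is joined to `∂W` by a continuous path inside the covered set, then `x`
can be joined to `∂W` using a chain of at most `(2/π) Vol(W) + 1` pieces in which only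
consecutive pieces meet, and by a polygonal path inside the union of these pieces of total
length at most `((2/π) Vol(W) + 1) · diam(W)`. -/
theorem distance_small_scales (W : Set (EuclideanSpace ℝ (Fin 2)))
    (hWb : Bornology.IsBounded W) (hWm : MeasurableSet W)
    (ℰ : Finset (Set (EuclideanSpace ℝ (Fin 2))))
    (hcomp : ∀ e ∈ ℰ, IsCompact e) (hconv : ∀ e ∈ ℰ, Convex ℝ e)
    (hsub : ∀ e ∈ ℰ, e ⊆ W)
    (hball : ∀ e ∈ ℰ, ∃ c : EuclideanSpace ℝ (Fin 2), Metric.closedBall c 1 ⊆ e)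
    (x : EuclideanSpace ℝ (Fin 2)) (hx : x ∈ ⋃₀ (ℰ : Set (Set (EuclideanSpace ℝ (Fin 2)))))
    (hpath : ∃ f : ℝ → EuclideanSpace ℝ (Fin 2), ContinuousOn f (Icc 0 1) ∧
      f 0 = x ∧ f 1 ∈ frontier W ∧
      ∀ t ∈ Icc (0 : ℝ) 1, f t ∈ ⋃₀ (ℰ : Set (Set (EuclideanSpace ℝ (Fin 2))))) :
    ∃ n : ℕ, ∃ hn : 0 < n, (n : ℝ) ≤ 2 / π * (volume W).toReal + 1 ∧
      ∃ e : Fin n → Set (EuclideanSpace ℝ (Fin 2)),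
        (∀ k, e k ∈ ℰ) ∧
        x ∈ e ⟨0, hn⟩ ∧
        (e ⟨n - 1, by omega⟩ ∩ frontier W).Nonempty ∧
        (∀ k : Fin n, ∀ h : (k : ℕ) + 1 < n, (e k ∩ e ⟨(k : ℕ) + 1, h⟩).Nonempty) ∧
        (∀ k l : Fin n, 2 ≤ |(k : ℤ) - (l : ℤ)| → e k ∩ e l = ∅) ∧
        ∃ m : ℕ, ∃ pts : Fin (m + 1) → EuclideanSpace ℝ (Fin 2),
          pts 0 = x ∧ pts (Fin.last m) ∈ frontier W ∧
          (∀ i : Fin m, segment ℝ (pts i.castSucc) (pts i.succ) ⊆ ⋃ k, e k) ∧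
          (∑ i : Fin m, dist (pts i.castSucc) (pts i.succ)) ≤
            (2 / π * (volume W).toReal + 1) * Metric.diam W := by
  classical
  obtain ⟨f, hf, hf0, hf1, hcov⟩ := hpath
  have hex : ∃ n, ∃ c, IsChainFrom ℰ x n c ∧ (c n ∩ frontier W).Nonempty := by
    obtain ⟨n, c, hc, h1⟩ := exists_chain_to ℰ hcomp x f hf hf0 hcov
    exact ⟨n, c, hc, f 1, h1, hf1⟩
  obtain ⟨c, hc, y, hyc, hyW⟩ := Nat.find_spec hex
  have hmin := fun m (hm : m < Nat.find hex) => Nat.find_min hex hm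
  generalize Nat.find hex = n at *
  have hdis : ∀ k l, k + 2 ≤ l → l ≤ n → c k ∩ c l = ∅ := by
    intro k l hkl hl
    by_contra hne
    obtain ⟨m, hm, c', hc', he⟩ := hc.shorten hkl hl (nonempty_iff_ne_empty.2 hne)
    exact hmin m hm ⟨c', hc', y, he ▸ hyc, hyW⟩
  obtain ⟨hcE, hxc, hcc⟩ := hc
  have hcount : ((n / 2 + 1 : ℕ) : ℝ) * π ≤ (volume W).toReal := by
    apply count_le W hWb (n / 2 + 1) (fun j => c (2 * j))
    · exact fun k hk => hcomp _ (hcE _ (by omega))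
    · exact fun k hk => hsub _ (hcE _ (by omega))
    · exact fun k hk => hball _ (hcE _ (by omega))
    · intro k hk l hl hkl
      rw [Set.disjoint_iff_inter_eq_empty]
      rcases Nat.lt_or_gt_of_ne hkl with h | h
      · exact hdis _ _ (by omega) (by omega)
      · rw [inter_comm]
        exact hdis _ _ (by omega) (by omega)
  have hn : ((n + 1 : ℕ) : ℝ) ≤ 2 / π * (volume W).toReal + 1 := by
    have h1 : ((n + 1 : ℕ) : ℝ) ≤ 2 * ((n / 2 + 1 : ℕ) : ℝ) := by
      exact_mod_cast (by omega : n + 1 ≤ 2 * (n / 2 + 1))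
    have h2 : ((n / 2 + 1 : ℕ) : ℝ) ≤ (volume W).toReal / π := (le_div_iff₀ pi_pos).2 hcount
    have h3 : 2 / π * (volume W).toReal = 2 * ((volume W).toReal / π) := by ring
    linarith
  refine ⟨n + 1, Nat.succ_pos n, hn, fun k => c k, fun k => hcE _ (by omega), hxc,
    ⟨y, by simpa using hyc, hyW⟩, fun k h => hcc _ (by omega), ?_, ?_⟩
  · intro k l hkl
    rcases le_abs.1 hkl with h | h
    · rw [inter_comm]
      exact hdis _ _ (by omega) (by omega)
    · exact hdis _ _ (by omega) (by omega)
  · have hp : ∀ k, ∃ p, (k ≤ n → p ∈ c k) ∧ (k < n → p ∈ c (k + 1)) ∧ (k = n → p = y) := by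
      intro k
      rcases Nat.lt_trichotomy k n with h | h | h
      · obtain ⟨p, h1, h2⟩ := hcc k h
        exact ⟨p, fun _ => h1, fun _ => h2, fun h' => by omega⟩
      · subst h
        exact ⟨y, fun _ => hyc, fun h' => by omega, fun _ => rfl⟩
      · exact ⟨y, fun h' => by omega, fun h' => by omega, fun _ => rfl⟩
    choose p hp1 hp2 hp3 using hp
    let q : ℕ → EuclideanSpace ℝ (Fin 2) := fun i => Nat.casesOn i x p
    have hq1 : ∀ k ≤ n, q k ∈ c k := by
      intro k hk
      cases k with
      | zero => exact hxc
      | succ k => exact hp2 k (by omega)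
    have hq2 : ∀ k ≤ n, q (k + 1) ∈ c k := fun k hk => hp1 k hk
    refine ⟨n + 1, fun i => q i, rfl, ?_, ?_, ?_⟩
    · have : q (n + 1) = y := hp3 n rfl
      simpa [this] using hyW
    · intro i
      have hi : (i : ℕ) ≤ n := by omega
      refine subset_trans ?_ (subset_iUnion (fun k : Fin (n + 1) => c k) i)
      exact (hconv _ (hcE i hi)).segment_subset (hq1 i hi) (hq2 i hi)
    · calc ∑ i : Fin (n + 1), dist (q (i.castSucc : Fin (n + 2))) (q (i.succ : Fin (n + 2)))
          ≤ ∑ i : Fin (n + 1), Metric.diam W := by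
            apply Finset.sum_le_sum
            intro i _
            have hi : (i : ℕ) ≤ n := by omega
            exact Metric.dist_le_diam_of_mem hWb (hsub _ (hcE i hi) (hq1 i hi))
              (hsub _ (hcE i hi) (hq2 i hi))
        _ = ((n + 1 : ℕ) : ℝ) * Metric.diam W := by simp
        _ ≤ _ := mul_le_mul_of_nonneg_right hn Metric.diam_nonneg
end
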